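/- Taylor remainder estimate (from the proof of Lemma 1). For every f ∈ D₀, all integers k ≥ 1 and ℓ ≥ 0, and every t ≥ 0, one has ‖(d/dt)^ℓ [B₁T₁(t)ι₁f − B₂T₂(t)ι₂f]‖_D ≤ ((Λ₁‖B₁‖ + Λ₂‖B₂‖)/k!) · t^k · max(‖ι₁(A^{k+ℓ} f)‖_{E₁}, ‖ι₂(A^{k+ℓ} f)‖_{E₂}). -/

import Mathlib

/-!
Write `F g s = B₁ T₁(s) ι₁ g - B₂ T₂(s) ι₂ g`. The hypotheses say that `F g` has derivative
`-F (A g)` on `[0,∞)`, that `F g 0 = 0` because `T_j(0) = I` and `B₁ι₁ = B₂ι₂`, and that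
`‖F g s‖ ≤ (Λ₁‖B₁‖ + Λ₂‖B₂‖) max(‖ι₁ g‖, ‖ι₂ g‖)`. Hence the `ℓ`-th derivative of `F f` is
`(-1)^ℓ F (A^ℓ f)` (`iteratedDerivWithin_of_flow`), and integrating `k` times from `0` the
uniform bound for `F (A^{k+ℓ} f)` gives the factor `t^k / k!` (`norm_le_of_flow`).
-/

open Set MeasureTheory Real

/-- If each `F g` has derivative `-F (A g)` on `[0,∞)`, differentiating `ℓ` times iterates `A`. -/
lemma iteratedDerivWithin_of_flow {X D : Type*} [NormedAddCommGroup D] [NormedSpace ℝ D]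
    (A : X → X) (F : X → ℝ → D)
    (hF : ∀ g t, 0 ≤ t → HasDerivWithinAt (F g) (-(F (A g) t)) (Ici 0) t) (g : X) (ℓ : ℕ) :
    ∀ t, 0 ≤ t → iteratedDerivWithin ℓ (F g) (Ici 0) t = (-1 : ℝ) ^ ℓ • F (A^[ℓ] g) t := by
  induction ℓ with
  | zero => intro t _; simp
  | succ n ih =>
    intro t ht
    rw [iteratedDerivWithin_succ, derivWithin_congr (s := Ici 0) (fun s hs => ih s hs) (ih t ht),
      (((hF (A^[n] g) t ht).fun_const_smul ((-1 : ℝ) ^ n)).derivWithin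
        (uniqueDiffOn_Ici 0 t ht)), Function.iterate_succ_apply', pow_succ]
    simp

/-- Taylor's bound at `0` for functions with `(F g)' = -F (A g)` and `F g 0 = 0`, by induction on
the order: the derivative obeys the bound of the previous order, and the fencing theorem integrates
it. The mean value argument does not need `D` to be complete. -/
lemma norm_le_of_flow {X D : Type*} [NormedAddCommGroup D] [NormedSpace ℝ D]
    (A : X → X) (F : X → ℝ → D) (N : X → ℝ)
    (hF : ∀ g t, 0 ≤ t → HasDerivWithinAt (F g) (-(F (A g) t)) (Ici 0) t)
    (h0 : ∀ g, F g 0 = 0) (hN : ∀ g t, 0 ≤ t → ‖F g t‖ ≤ N g) (k : ℕ) :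
    ∀ g t, 0 ≤ t → ‖F g t‖ ≤ N (A^[k] g) * (t ^ k / k.factorial) := by
  induction k with
  | zero => intro g t ht; simpa using hN g t ht
  | succ n ih =>
    intro g t ht
    refine image_norm_le_of_norm_deriv_right_le_deriv_boundary (a := 0) (b := t) (f := F g)
      (f' := fun s => -(F (A g) s))
      (B := fun s => N (A^[n + 1] g) * (s ^ (n + 1) / (n + 1).factorial))
      (B' := fun s => N (A^[n + 1] g) * (s ^ n / n.factorial)) ?_ ?_ ?_ ?_ ?_
      (right_mem_Icc.2 ht)
    · exact fun s hs => (hF g s hs.1).continuousWithinAt.mono Icc_subset_Ici_self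
    · exact fun s hs => (hF g s hs.1).mono (Ici_subset_Ici.2 hs.1)
    · simp [h0]
    · intro s
      have h := ((hasDerivAt_pow (n + 1) s).div_const ((n + 1).factorial : ℝ)).const_mul
        (N (A^[n + 1] g))
      refine h.congr_deriv ?_
      have : (n.factorial : ℝ) ≠ 0 := by positivity
      rw [Nat.factorial_succ]
      push_cast
      field_simp
    · intro s hs
      rw [norm_neg, Function.iterate_succ_apply]
      exact ih (A g) s hs.1

/-- **Taylor remainder estimate** (from the proof of Lemma 1). For every `f ∈ D₀`, all integers
`k ≥ 1`, `ℓ ≥ 0` and every `t ≥ 0`,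
`‖(d/dt)^ℓ [B₁T₁(t)ι₁f − B₂T₂(t)ι₂f]‖ ≤ ((Λ₁‖B₁‖ + Λ₂‖B₂‖)/k!) t^k max(‖ι₁(A^{k+ℓ}f)‖, ‖ι₂(A^{k+ℓ}f)‖)`. -/
theorem taylor_remainder_estimate
    {E₁ E₂ D : Type*}
    [NormedAddCommGroup E₁] [NormedSpace ℂ E₁]
    [NormedAddCommGroup E₂] [NormedSpace ℂ E₂]
    [NormedAddCommGroup D] [NormedSpace ℂ D]
    {D₀ : Type*} [AddCommGroup D₀] [Module ℂ D₀]
    (α : ℝ) (hα : α ∈ Set.Ioo (0 : ℝ) 1)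
    (T₁ : ℝ → E₁ →L[ℂ] E₁) (T₂ : ℝ → E₂ →L[ℂ] E₂)
    (hT₁0 : T₁ 0 = 1) (hT₂0 : T₂ 0 = 1)
    (Λ₁ Λ₂ : ℝ) (hΛ₁ : 1 ≤ Λ₁) (hΛ₂ : 1 ≤ Λ₂)
    (hT₁ : ∀ t : ℝ, 0 ≤ t → ‖T₁ t‖ ≤ Λ₁)
    (hT₂ : ∀ t : ℝ, 0 ≤ t → ‖T₂ t‖ ≤ Λ₂)
    (B₁ : E₁ →L[ℂ] D) (B₂ : E₂ →L[ℂ] D)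
    (ι₁ : D₀ →ₗ[ℂ] E₁) (ι₂ : D₀ →ₗ[ℂ] E₂)
    (hι₁ : Function.Injective ι₁) (hι₂ : Function.Injective ι₂)
    (A : D₀ →ₗ[ℂ] D₀)
    -- (i): the m-th derivative of `t ↦ T_j(t) ι_j f` on `[0,∞)` is `(−1)^m T_j(t) ι_j (A^m f)`
    (hderiv₁ : ∀ (f : D₀) (m : ℕ) (t : ℝ), 0 ≤ t →
      HasDerivWithinAt (fun s : ℝ => T₁ s (ι₁ ((A ^ m) f)))
        (-(T₁ t (ι₁ ((A ^ (m + 1)) f)))) (Set.Ici 0) t)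
    (hderiv₂ : ∀ (f : D₀) (m : ℕ) (t : ℝ), 0 ≤ t →
      HasDerivWithinAt (fun s : ℝ => T₂ s (ι₂ ((A ^ m) f)))
        (-(T₂ t (ι₂ ((A ^ (m + 1)) f)))) (Set.Ici 0) t)
    -- (ii)
    (hB : ∀ f : D₀, B₁ (ι₁ f) = B₂ (ι₂ f))
    (f : D₀) (k ℓ : ℕ) (hk : 1 ≤ k) (t : ℝ) (ht : 0 ≤ t) :
    ‖iteratedDerivWithin ℓ
        (fun s : ℝ => B₁ (T₁ s (ι₁ f)) - B₂ (T₂ s (ι₂ f))) (Set.Ici 0) t‖ ≤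
      ((Λ₁ * ‖B₁‖ + Λ₂ * ‖B₂‖) / (Nat.factorial k)) * t ^ k *
        max ‖ι₁ ((A ^ (k + ℓ)) f)‖ ‖ι₂ ((A ^ (k + ℓ)) f)‖ := by
  let F : D₀ → ℝ → D := fun g s => B₁ (T₁ s (ι₁ g)) - B₂ (T₂ s (ι₂ g))
  let N : D₀ → ℝ := fun g => (Λ₁ * ‖B₁‖ + Λ₂ * ‖B₂‖) * max ‖ι₁ g‖ ‖ι₂ g‖
  have hF : ∀ g t, 0 ≤ t → HasDerivWithinAt (F g) (-(F (A g) t)) (Ici 0) t := by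
    intro g t ht
    have h₁ := (B₁.restrictScalars ℝ).hasFDerivAt.comp_hasDerivWithinAt t (hderiv₁ g 0 t ht)
    have h₂ := (B₂.restrictScalars ℝ).hasFDerivAt.comp_hasDerivWithinAt t (hderiv₂ g 0 t ht)
    have h := h₁.sub h₂
    simp only [zero_add, pow_one, pow_zero, Module.End.one_apply] at h
    refine h.congr_deriv ?_
    simp only [F, ContinuousLinearMap.coe_restrictScalars', map_neg]
    abel
  have h0 : ∀ g, F g 0 = 0 := fun g => by simp [F, hT₁0, hT₂0, hB g]
  have hN : ∀ g t, 0 ≤ t → ‖F g t‖ ≤ N g := by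
    intro g t ht
    have h₁ : ‖B₁ (T₁ t (ι₁ g))‖ ≤ ‖B₁‖ * (Λ₁ * max ‖ι₁ g‖ ‖ι₂ g‖) :=
      B₁.le_opNorm_of_le ((T₁ t).le_of_opNorm_le_of_le (hT₁ t ht) (le_max_left _ _))
    have h₂ : ‖B₂ (T₂ t (ι₂ g))‖ ≤ ‖B₂‖ * (Λ₂ * max ‖ι₁ g‖ ‖ι₂ g‖) :=
      B₂.le_opNorm_of_le ((T₂ t).le_of_opNorm_le_of_le (hT₂ t ht) (le_max_right _ _))
    calc ‖F g t‖ ≤ _ := norm_sub_le _ _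
      _ ≤ _ := add_le_add h₁ h₂
      _ = N g := by ring
  have hD : iteratedDerivWithin ℓ (fun s : ℝ => B₁ (T₁ s (ι₁ f)) - B₂ (T₂ s (ι₂ f))) (Ici 0) t
      = (-1 : ℝ) ^ ℓ • F (A^[ℓ] f) t := iteratedDerivWithin_of_flow A F hF f ℓ t ht
  have hA : A^[k] (A^[ℓ] f) = (A ^ (k + ℓ)) f := by
    rw [← Function.iterate_add_apply, Module.End.pow_apply]
  rw [hD, norm_smul, norm_pow, norm_neg, norm_one, one_pow, one_mul]
  calc ‖F (A^[ℓ] f) t‖ ≤ N (A^[k] (A^[ℓ] f)) * (t ^ k / k.factorial) :=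
        norm_le_of_flow A F N hF h0 hN k _ t ht
    _ = _ := by rw [hA]; ring
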